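/- arXiv:2508.00747 — 2 statements merged into one kernel-verified Lean document; each statement's English description precedes it below -/
import Mathlib

section
/- Let M be a finite-dimensional, connected, complete, smooth Riemannian manifold, U ⊆ M open, (Ω, ν) a measurable space with a finite measure, and b : Ω → ℝ integrable with b_Ω := ∫_Ω b(ω) dν(ω). Suppose for each ω ∈ Ω a function G_ω : U → ℝ is given such that ω ↦ G_ω(q) is integrable for every q ∈ U and G_ω is b(ω)-concave. Then f(q) := ∫_Ω G_ω(q) dν(ω) is b_Ω-concave on U, and its directional differential satisfies D_q f(v) = ∫_Ω D_q(G_ω)(v) dν(ω) for all q ∈ U and v ∈ T_qM. -/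
open MeasureTheory Metric Set Filter
open scoped Topology ENNReal NNReal

noncomputable section

/-- An abstraction of a finite-dimensional smooth Riemannian manifold structure on a
metric space `M` (whose distance is the geodesic distance): the tangent space at every
point is identified with `EuclideanSpace ℝ (Fin n)` via an orthonormal frame, `exp` is
the Riemann exponential map, `IsCkOn` is the `C^k` regularity predicate for real valued
functions on open subsets, and `laplacian` is the Laplace–Beltrami operator.  The axioms
record basic facts tying these data together. -/
structure RiemannianManifold (n : ℕ) (M : Type) [MetricSpace M] where
  /-- the Riemann exponential map `exp q : T_qM → M` -/
  exp : M → EuclideanSpace ℝ (Fin n) → M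
  exp_zero : ∀ q : M, exp q 0 = q
  /-- the geodesic `t ↦ exp q (t • v)` has speed at most `‖v‖` -/
  dist_exp_exp_le : ∀ (q : M) (v : EuclideanSpace ℝ (Fin n)) (s t : ℝ),
    dist (exp q (s • v)) (exp q (t • v)) ≤ |s - t| * ‖v‖
  /-- Hopf–Rinow: by completeness, any two points are joined by a minimizing geodesic -/
  exists_minimal_geodesic : ∀ q x : M, ∃ v : EuclideanSpace ℝ (Fin n),
    ‖v‖ = dist q x ∧ exp q v = x
  /-- a vector realizing the distance determines a minimizing geodesic -/
  dist_exp_of_min : ∀ (q x : M) (v : EuclideanSpace ℝ (Fin n)), exp q v = x →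
    ‖v‖ = dist q x → ∀ t ∈ Set.Icc (0:ℝ) 1, dist q (exp q (t • v)) = t * dist q x
  /-- the `C^k` regularity predicate for real valued functions on subsets of `M` -/
  IsCkOn : ℕ∞ → (M → ℝ) → Set M → Prop
  /-- the Laplace–Beltrami operator, evaluated at a point -/
  laplacian : (M → ℝ) → M → ℝ
  /-- a `C²` function with a local minimum at `q` has nonnegative Laplacian at `q` -/
  laplacian_nonneg_of_isLocalMin : ∀ (f : M → ℝ) (q : M) (r : ℝ), 0 < r →
    IsCkOn 2 f (Metric.ball q r) → (∀ y ∈ Metric.ball q r, f q ≤ f y) →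
    0 ≤ laplacian f q

namespace RiemannianManifold

variable {n : ℕ} {M : Type} [MetricSpace M]

/-- `C⁺_q`: the set of points joined to `q` by at least two distinct minimizing
geodesics (every minimizing geodesic from `q` to `x` is `t ↦ exp q (t • v)` for a
vector `v` with `exp q v = x` and `‖v‖ = d(q,x)`). -/
def cutLocusPlus (R : RiemannianManifold n M) (q : M) : Set M :=
  {x | ∃ v w : EuclideanSpace ℝ (Fin n), v ≠ w ∧
    ‖v‖ = dist q x ∧ R.exp q v = x ∧ ‖w‖ = dist q x ∧ R.exp q w = x}

/-- the cut locus of `q` : the closure of `C⁺_q` in `M` -/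
def cutLocus (R : RiemannianManifold n M) (q : M) : Set M :=
  closure (R.cutLocusPlus q)

/-- `f` has one-sided directional derivative `L` at `q` in direction `w`, i.e.
`(f (exp_q (t • w)) - f q)/t → L` as `t ↘ 0`. -/
def HasDirDeriv (R : RiemannianManifold n M) (f : M → ℝ) (q : M)
    (w : EuclideanSpace ℝ (Fin n)) (L : ℝ) : Prop :=
  Tendsto (fun t : ℝ => (f (R.exp q (t • w)) - f q) / t) (𝓝[>] (0:ℝ)) (𝓝 L)

/-- the one-sided directional differential `D_q f : T_qM → ℝ` exists and is a linear
map; equivalently, `f` is differentiable at `q` in the classical sense -/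
def DirDerivLinear (R : RiemannianManifold n M) (f : M → ℝ) (q : M) : Prop :=
  ∃ L : EuclideanSpace ℝ (Fin n) →ₗ[ℝ] ℝ, ∀ w, R.HasDirDeriv f q w (L w)

/-- `f` is `b`-concave on `U`: along every geodesic `t ↦ exp q (t • v)` lying in `U`,
the function `t ↦ f (exp q (t • v)) - (1/2) b t² ‖v‖²` is concave. -/
def BConcaveOn (R : RiemannianManifold n M) (b : ℝ) (f : M → ℝ) (U : Set M) : Prop :=
  ∀ q ∈ U, ∀ (v : EuclideanSpace ℝ (Fin n)) (a c : ℝ),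
    (∀ t ∈ Set.Icc a c, R.exp q (t • v) ∈ U) →
    ConcaveOn ℝ (Set.Icc a c)
      (fun t : ℝ => f (R.exp q (t • v)) - b / 2 * t ^ 2 * ‖v‖ ^ 2)

/-- `Δ_q f < C` in the barrier sense, for a function defined (at least) on `U`: there is
`r > 0` with `B_r(q) ⊆ U` and a `C²` function `h : B_r(q) → ℝ` with `h q = f q`,
`h ≥ f` on `B_r(q)` and `Δ h (q) < C`. -/
def LaplacianLtBarrier (R : RiemannianManifold n M) (f : M → ℝ) (q : M) (C : ℝ)
    (U : Set M) : Prop :=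
  ∃ r > 0, Metric.ball q r ⊆ U ∧ ∃ h : M → ℝ, R.IsCkOn 2 h (Metric.ball q r) ∧
    h q = f q ∧ (∀ y ∈ Metric.ball q r, f y ≤ h y) ∧ R.laplacian h q < C

end RiemannianManifold

/-- the Fréchet function of the distribution `P` of a random variable on `M` -/
def frechetFn {M : Type} [MetricSpace M] [MeasurableSpace M] (P : Measure M) (q : M) : ℝ :=
  ∫ x, dist x q ^ 2 ∂P

/-!
Along a geodesic, subtracting the quadratic term turns each `G ω` into a concave function of one
real variable, and this subtraction commutes with the integral and does not affect derivatives
at `0`. So everything reduces to integrals of concave functions `g ω` on an interval. Such integrals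
are concave by monotonicity. Secant slopes of a concave function are antitone, so for `a < x < c`
the slopes of `g ω` between `x` and points of `(x, c]` lie between the slopes from `x` to `c` and
from `x` to `a`. These two are integrable in `ω`, and dominated convergence exchanges the
right derivative with the integral.
-/

section Convergence

variable {Ω ι E : Type*} [MeasurableSpace Ω] {ν : Measure Ω} [NormedAddCommGroup E]

theorem integrable_of_filter_dominated_convergence {l : Filter ι} [l.NeBot]
    [l.IsCountablyGenerated] {F : ι → Ω → E} {f : Ω → E} (bound : Ω → ℝ)
    (hF_meas : ∀ᶠ i in l, AEStronglyMeasurable (F i) ν)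
    (h_bound : ∀ᶠ i in l, ∀ᵐ ω ∂ν, ‖F i ω‖ ≤ bound ω) (bound_integrable : Integrable bound ν)
    (h_lim : ∀ᵐ ω ∂ν, Tendsto (fun i => F i ω) l (𝓝 (f ω))) : Integrable f ν := by
  obtain ⟨u, hu, hFu⟩ := exists_seq_forall_of_frequently (hF_meas.and h_bound).frequently
  have h_lim_seq : ∀ᵐ ω ∂ν, Tendsto (fun k => F (u k) ω) atTop (𝓝 (f ω)) :=
    h_lim.mono fun _ h => h.comp hu
  exact ⟨aestronglyMeasurable_of_tendsto_ae atTop (fun k => (hFu k).1) h_lim_seq,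
    hasFiniteIntegral_of_dominated_convergence bound_integrable.2 (fun k => (hFu k).2) h_lim_seq⟩

end Convergence

section Slope

variable {Ω E : Type*} [MeasurableSpace Ω] {ν : Measure Ω} [NormedAddCommGroup E]
  [NormedSpace ℝ E] {g : Ω → ℝ → E} {x y : ℝ}

theorem integrable_slope (hx : Integrable (fun ω => g ω x) ν)
    (hy : Integrable (fun ω => g ω y) ν) : Integrable (fun ω => slope (g ω) x y) ν :=
  (hy.sub hx).smul (y - x)⁻¹

theorem integral_slope (hx : Integrable (fun ω => g ω x) ν)
    (hy : Integrable (fun ω => g ω y) ν) :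
    ∫ ω, slope (g ω) x y ∂ν = slope (fun t => ∫ ω, g ω t ∂ν) x y := by
  simp only [slope_def_module]
  rw [integral_smul, integral_sub hy hx]

end Slope

section Concave

variable {Ω : Type*} [MeasurableSpace Ω] {ν : Measure Ω}

theorem concaveOn_integral {E F : Type*} [AddCommMonoid E] [Module ℝ E]
    [NormedAddCommGroup F] [NormedSpace ℝ F] [PartialOrder F] [IsOrderedAddMonoid F]
    [IsOrderedModule ℝ F] [ClosedIciTopology F]
    {s : Set E} {g : Ω → E → F} (hs : Convex ℝ s) (hconc : ∀ᵐ ω ∂ν, ConcaveOn ℝ s (g ω))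
    (hint : ∀ x ∈ s, Integrable (fun ω => g ω x) ν) :
    ConcaveOn ℝ s (fun x => ∫ ω, g ω x ∂ν) := by
  refine ⟨hs, fun x hx y hy α β hα hβ hαβ => ?_⟩
  have hx_int : Integrable (fun ω => α • g ω x) ν := (hint x hx).smul α
  have hy_int : Integrable (fun ω => β • g ω y) ν := (hint y hy).smul β
  calc α • (∫ ω, g ω x ∂ν) + β • (∫ ω, g ω y ∂ν)
      = ∫ ω, α • g ω x + β • g ω y ∂ν := by
        rw [integral_add hx_int hy_int, integral_smul, integral_smul]
    _ ≤ ∫ ω, g ω (α • x + β • y) ∂ν :=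
        integral_mono_ae (hx_int.add hy_int) (hint _ (hs hx hy hα hβ hαβ))
          (hconc.mono fun _ h => h.2 hx hy hα hβ hαβ)

theorem abs_slope_le_max_of_concaveOn {𝕜 : Type*} [Field 𝕜] [LinearOrder 𝕜] [IsStrictOrderedRing 𝕜]
    {s : Set 𝕜} {f : 𝕜 → 𝕜} (hf : ConcaveOn 𝕜 s f) {a x t c : 𝕜} (ha : a ∈ s) (hc : c ∈ s)
    (hax : a < x) (hxt : x < t) (htc : t ≤ c) :
    |slope f x t| ≤ max |slope f x c| |slope f x a| := by
  have hs := hf.1.ordConnected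
  have hx : x ∈ s := hs.out ha hc ⟨hax.le, hxt.le.trans htc⟩
  have ht : t ∈ s := hs.out ha hc ⟨(hax.trans hxt).le, htc⟩
  have hanti := hf.slope_anti hx
  exact abs_le_max_abs_abs (hanti ⟨ht, hxt.ne'⟩ ⟨hc, (hxt.trans_le htc).ne'⟩ htc)
    (hanti ⟨ha, hax.ne⟩ ⟨ht, hxt.ne'⟩ (hax.trans hxt).le)

theorem hasDerivWithinAt_rightDeriv_of_concaveOn {s : Set ℝ} {f : ℝ → ℝ} {x : ℝ}
    (hf : ConcaveOn ℝ s f) (hx : x ∈ interior s) :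
    HasDerivWithinAt f (derivWithin f (Ioi x) x) (Ioi x) x := by
  have hneg := hf.neg.differentiableWithinAt_Ioi_of_mem_interior hx
  exact (differentiableWithinAt_neg_iff.1 hneg).hasDerivWithinAt

theorem hasDerivWithinAt_Ioi_integral_of_concaveOn {s : Set ℝ} {x : ℝ} {g : Ω → ℝ → ℝ}
    (hx : x ∈ interior s) (hconc : ∀ᵐ ω ∂ν, ConcaveOn ℝ s (g ω))
    (hint : ∀ t ∈ s, Integrable (fun ω => g ω t) ν) :
    Integrable (fun ω => derivWithin (g ω) (Ioi x) x) ν ∧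
      HasDerivWithinAt (fun t => ∫ ω, g ω t ∂ν) (∫ ω, derivWithin (g ω) (Ioi x) x ∂ν)
        (Ioi x) x := by
  obtain ⟨a, c, -, hac_nhds, hac⟩ :=
    exists_Icc_mem_subset_of_mem_nhds (mem_interior_iff_mem_nhds.1 hx)
  obtain ⟨hax, hxc⟩ : x ∈ Ioo a c := Icc_mem_nhds_iff.1 hac_nhds
  have ha : a ∈ s := hac ⟨le_rfl, (hax.trans hxc).le⟩
  have hc : c ∈ s := hac ⟨(hax.trans hxc).le, le_rfl⟩
  have hx_int := hint x (interior_subset hx)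
  have hslope_int : ∀ t ∈ s, Integrable (fun ω => slope (g ω) x t) ν := fun t ht =>
    integrable_slope hx_int (hint t ht)
  have hnear : ∀ᶠ t in 𝓝[>] x, t ∈ Ioc x c := Ioc_mem_nhdsGT hxc
  have hnear_mem : ∀ t ∈ Ioc x c, t ∈ s := fun t ht => hac ⟨(hax.trans ht.1).le, ht.2⟩
  have hmeas : ∀ᶠ t in 𝓝[>] x, AEStronglyMeasurable (fun ω => slope (g ω) x t) ν :=
    hnear.mono fun t ht => (hslope_int t (hnear_mem t ht)).aestronglyMeasurable
  have hbound : ∀ᶠ t in 𝓝[>] x, ∀ᵐ ω ∂ν,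
      ‖slope (g ω) x t‖ ≤ max |slope (g ω) x c| |slope (g ω) x a| :=
    hnear.mono fun t ht =>
      hconc.mono fun ω h => abs_slope_le_max_of_concaveOn h ha hc hax ht.1 ht.2
  have hbound_int : Integrable (fun ω => max |slope (g ω) x c| |slope (g ω) x a|) ν :=
    (hslope_int c hc).abs.sup (hslope_int a ha).abs
  have hlim : ∀ᵐ ω ∂ν, Tendsto (fun t => slope (g ω) x t) (𝓝[>] x)
      (𝓝 (derivWithin (g ω) (Ioi x) x)) :=
    hconc.mono fun ω h => (hasDerivWithinAt_iff_tendsto_slope' self_notMem_Ioi).1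
      (hasDerivWithinAt_rightDeriv_of_concaveOn h hx)
  refine ⟨integrable_of_filter_dominated_convergence _ hmeas hbound hbound_int hlim, ?_⟩
  rw [hasDerivWithinAt_iff_tendsto_slope' self_notMem_Ioi]
  refine (tendsto_integral_filter_of_dominated_convergence _ hmeas hbound hbound_int hlim).congr' ?_
  filter_upwards [hnear] with t ht
  exact integral_slope hx_int (hint t (hnear_mem t ht))

end Concave

namespace RiemannianManifold

variable {n : ℕ} {M : Type} [MetricSpace M] (R : RiemannianManifold n M)

/-- The restriction of `f` to the geodesic `t ↦ exp q (t • v)`, minus the quadratic function of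
`t` that `b`-concavity allows: `f` is `b`-concave on `U` when these functions are concave on the
intervals which the geodesic maps into `U`. -/
def correctedRestriction (b : ℝ) (f : M → ℝ) (q : M) (v : EuclideanSpace ℝ (Fin n)) (t : ℝ) : ℝ :=
  f (R.exp q (t • v)) - b / 2 * t ^ 2 * ‖v‖ ^ 2

theorem continuous_exp_smul (q : M) (v : EuclideanSpace ℝ (Fin n)) :
    Continuous fun t : ℝ => R.exp q (t • v) :=
  (LipschitzWith.of_dist_le_mul (K := ‖v‖₊) fun s t => by
    simpa only [Real.dist_eq, coe_nnnorm, mul_comm] using R.dist_exp_exp_le q v s t).continuous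

theorem eventually_exp_smul_mem {U : Set M} (hU : IsOpen U) {q : M} (hq : q ∈ U)
    (v : EuclideanSpace ℝ (Fin n)) : ∀ᶠ t : ℝ in 𝓝 0, R.exp q (t • v) ∈ U :=
  (R.continuous_exp_smul q v).continuousAt.eventually_mem <| hU.mem_nhds <| by
    rwa [zero_smul, R.exp_zero]

variable {R}

theorem hasDirDeriv_iff_hasDerivWithinAt {f : M → ℝ} {q : M} {v : EuclideanSpace ℝ (Fin n)}
    {L : ℝ} :
    R.HasDirDeriv f q v L ↔ HasDerivWithinAt (fun t : ℝ => f (R.exp q (t • v))) L (Ioi 0) 0 := by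
  simp only [HasDirDeriv, hasDerivWithinAt_iff_tendsto_slope' self_notMem_Ioi,
    slope_fun_def_field, zero_smul, R.exp_zero, sub_zero]

theorem hasDirDeriv_iff_correctedRestriction (b : ℝ) {f : M → ℝ} {q : M}
    {v : EuclideanSpace ℝ (Fin n)} {L : ℝ} :
    R.HasDirDeriv f q v L ↔
      HasDerivWithinAt (R.correctedRestriction b f q v) L (Ioi 0) 0 := by
  have hquad : HasDerivWithinAt (fun t : ℝ => b / 2 * t ^ 2 * ‖v‖ ^ 2) 0 (Ioi 0) 0 := by
    simpa using (((hasDerivAt_id (0 : ℝ)).pow 2).const_mul (b / 2)).mul_const (‖v‖ ^ 2)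
      |>.hasDerivWithinAt
  rw [hasDirDeriv_iff_hasDerivWithinAt]
  refine ⟨fun h => ?_, fun h => ?_⟩
  · simpa only [sub_zero] using! h.sub hquad
  · simpa only [correctedRestriction, sub_add_cancel, add_zero] using h.fun_add hquad

variable {Ω : Type*} [MeasurableSpace Ω] {ν : Measure Ω} {b : Ω → ℝ} {G : Ω → M → ℝ} {q : M}
  {v : EuclideanSpace ℝ (Fin n)} {t : ℝ}

theorem integrable_correctedRestriction (hb : Integrable b ν)
    (hG : Integrable (fun ω => G ω (R.exp q (t • v))) ν) :
    Integrable (fun ω => R.correctedRestriction (b ω) (G ω) q v t) ν :=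
  hG.sub (((hb.div_const 2).mul_const _).mul_const _)

theorem integral_correctedRestriction (hb : Integrable b ν)
    (hG : Integrable (fun ω => G ω (R.exp q (t • v))) ν) :
    ∫ ω, R.correctedRestriction (b ω) (G ω) q v t ∂ν =
      R.correctedRestriction (∫ ω, b ω ∂ν) (fun y => ∫ ω, G ω y ∂ν) q v t := by
  simp only [correctedRestriction]
  rw [integral_sub hG (((hb.div_const 2).mul_const _).mul_const _), integral_mul_const,
    integral_mul_const, integral_div]

variable {U : Set M}

theorem bConcaveOn_integral (hb : Integrable b ν)
    (hGint : ∀ q ∈ U, Integrable (fun ω => G ω q) ν)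
    (hGconc : ∀ᵐ ω ∂ν, R.BConcaveOn (b ω) (G ω) U) :
    R.BConcaveOn (∫ ω, b ω ∂ν) (fun q => ∫ ω, G ω q ∂ν) U := by
  intro q hq v a c hmem
  refine (concaveOn_integral (convex_Icc a c) (hGconc.mono fun ω h => h q hq v a c hmem)
    fun t ht => integrable_correctedRestriction hb (hGint _ (hmem t ht))).congr ?_
  exact fun t ht => integral_correctedRestriction hb (hGint _ (hmem t ht))

theorem hasDirDeriv_integral (hU : IsOpen U) (hb : Integrable b ν)
    (hGint : ∀ q ∈ U, Integrable (fun ω => G ω q) ν)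
    (hGconc : ∀ ω, R.BConcaveOn (b ω) (G ω) U) (hq : q ∈ U) (v : EuclideanSpace ℝ (Fin n)) :
    ∃ D : Ω → ℝ, (∀ ω, R.HasDirDeriv (G ω) q v (D ω)) ∧ Integrable D ν ∧
      R.HasDirDeriv (fun y => ∫ ω, G ω y ∂ν) q v (∫ ω, D ω ∂ν) := by
  obtain ⟨a, c, -, hac_nhds, hac⟩ :=
    exists_Icc_mem_subset_of_mem_nhds (R.eventually_exp_smul_mem hU hq v)
  have h0 : (0 : ℝ) ∈ interior (Icc a c) := mem_interior_iff_mem_nhds.2 hac_nhds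
  have hconc (ω : Ω) : ConcaveOn ℝ (Icc a c) (R.correctedRestriction (b ω) (G ω) q v) :=
    hGconc ω q hq v a c hac
  obtain ⟨hD_int, hD⟩ := hasDerivWithinAt_Ioi_integral_of_concaveOn h0 (ae_of_all ν hconc)
    fun t ht => integrable_correctedRestriction hb (hGint _ (hac ht))
  refine ⟨_, fun ω => (hasDirDeriv_iff_correctedRestriction (b ω)).2
    (hasDerivWithinAt_rightDeriv_of_concaveOn (hconc ω) h0), hD_int,
    (hasDirDeriv_iff_correctedRestriction (∫ ω, b ω ∂ν)).2 (hD.congr_of_eventuallyEq ?_ ?_)⟩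
  · filter_upwards [mem_nhdsWithin_of_mem_nhds hac_nhds] with t ht
    exact (integral_correctedRestriction hb (hGint _ (hac ht))).symm
  · exact (integral_correctedRestriction hb (hGint _ (hac (interior_subset h0)))).symm

end RiemannianManifold

theorem integral_bConcave_and_dirDeriv_general
    {n : ℕ} {M : Type} [MetricSpace M]
    (R : RiemannianManifold n M) {U : Set M} (hU : IsOpen U)
    {Ω : Type*} [MeasurableSpace Ω] (ν : Measure Ω)
    (b : Ω → ℝ) (hb : Integrable b ν)
    (G : Ω → M → ℝ)
    (hGint : ∀ q ∈ U, Integrable (fun ω => G ω q) ν)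
    (hGconc : ∀ ω : Ω, R.BConcaveOn (b ω) (G ω) U) :
    R.BConcaveOn (∫ ω, b ω ∂ν) (fun q => ∫ ω, G ω q ∂ν) U ∧
    ∀ q ∈ U, ∀ v : EuclideanSpace ℝ (Fin n), ∃ D : Ω → ℝ,
      (∀ ω : Ω, R.HasDirDeriv (G ω) q v (D ω)) ∧
      Integrable D ν ∧
      R.HasDirDeriv (fun y => ∫ ω, G ω y ∂ν) q v (∫ ω, D ω ∂ν) :=
  ⟨RiemannianManifold.bConcaveOn_integral hb hGint (ae_of_all ν hGconc),
    fun _ hq v => RiemannianManifold.hasDirDeriv_integral hU hb hGint hGconc hq v⟩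

/-- Integrals of `b(ω)`-concave functions over a finite measure space are
`(∫ b)`-concave, and the directional differential of the integral is the integral of
the directional differentials. -/
theorem integral_bConcave_and_dirDeriv
    {n : ℕ} {M : Type} [MetricSpace M] [ConnectedSpace M] [CompleteSpace M]
    (R : RiemannianManifold n M) {U : Set M} (hU : IsOpen U)
    {Ω : Type} [MeasurableSpace Ω] (ν : Measure Ω) [IsFiniteMeasure ν]
    (b : Ω → ℝ) (hb : Integrable b ν)
    (G : Ω → M → ℝ)
    (hGint : ∀ q ∈ U, Integrable (fun ω => G ω q) ν)
    (hGconc : ∀ ω : Ω, R.BConcaveOn (b ω) (G ω) U) :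
    R.BConcaveOn (∫ ω, b ω ∂ν) (fun q => ∫ ω, G ω q ∂ν) U ∧
    ∀ q ∈ U, ∀ v : EuclideanSpace ℝ (Fin n), ∃ D : Ω → ℝ,
      (∀ ω : Ω, R.HasDirDeriv (G ω) q v (D ω)) ∧
      Integrable D ν ∧
      R.HasDirDeriv (fun y => ∫ ω, G ω y ∂ν) q v (∫ ω, D ω ∂ν) :=
  integral_bConcave_and_dirDeriv_general R hU ν b hb G hGint hGconc
end
end

section
/- Let M be a finite-dimensional, connected, complete, smooth Riemannian manifold, U ⊆ M open, and b, s, L > 0. If f : U → ℝ is b-concave, L-Lipschitz, nonnegative, and bounded from above by s, then the function f² is 2(s·b + L²)-concave on U. -/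
open MeasureTheory Metric Set Filter
open scoped Topology ENNReal NNReal

noncomputable section

/-!
Along a geodesic of speed `‖v‖` the function `f` becomes a `‖v‖ L`-Lipschitz function `g` of one
real variable which falls below its chords by at most the `b`-concavity defect `e`. If `m` is the
height of a chord of `g` and `z ≥ m - e` the value of `g` at the same point, then
`z ^ 2 ≥ m ^ 2 - 2 s e` because both lie in `[0, s]`. Replacing the square of the chord of `g` by
the chord of `g ^ 2` costs exactly the variance `α β (g x - g y) ^ 2`, which the Lipschitz bound
controls.
-/

lemma add_mul_sq_eq_sq_add_mul_sub_sq {A : Type*} [CommRing A] {α β : A} (hαβ : α + β = 1)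
    (x y : A) :
    α * x ^ 2 + β * y ^ 2 = (α * x + β * y) ^ 2 + α * β * (x - y) ^ 2 := by
  obtain rfl : β = 1 - α := eq_sub_of_add_eq' hαβ
  ring

lemma sq_sub_two_mul_mul_le_sq {A : Type*} [CommRing A] [LinearOrder A] [IsStrictOrderedRing A]
    {m z s e : A} (hm : 0 ≤ m) (hms : m ≤ s) (hz : 0 ≤ z) (hzs : z ≤ s) (he : 0 ≤ e)
    (hmz : m - e ≤ z) : m ^ 2 - 2 * s * e ≤ z ^ 2 := by
  have hsum : m + z ≤ 2 * s := by linarith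
  have hdiff : (m - z) * (m + z) ≤ e * (2 * s) :=
    calc (m - z) * (m + z) ≤ e * (m + z) := by gcongr; linarith
      _ ≤ e * (2 * s) := by gcongr
  linarith

lemma strongConcaveOn_sq_of_lipschitzOnWith {E : Type*} [NormedAddCommGroup E] [NormedSpace ℝ E]
    {S : Set E} {g : E → ℝ} {b s : ℝ} {K : ℝ≥0} (hb : 0 ≤ b)
    (hconc : StrongConcaveOn S (-b) g) (hLip : LipschitzOnWith K g S)
    (hg : MapsTo g S (Icc 0 s)) :
    StrongConcaveOn S (-(2 * (s * b + K ^ 2))) (fun x => g x ^ 2) := by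
  refine ⟨hconc.1, fun x hx y hy α β hα hβ hαβ => ?_⟩
  have hchord := hconc.2 hx hy hα hβ hαβ
  simp only [smul_eq_mul] at hchord ⊢
  set z := g (α • x + β • y)
  set m := α * g x + β * g y
  set e := α * β * (b / 2 * ‖x - y‖ ^ 2) with he
  have hz : z ∈ Icc 0 s := hg (hconc.1 hx hy hα hβ hαβ)
  have hm : m ∈ Icc 0 s := convex_Icc 0 s (hg hx) (hg hy) hα hβ hαβ
  have hzsq : m ^ 2 - 2 * s * e ≤ z ^ 2 :=
    sq_sub_two_mul_mul_le_sq hm.1 hm.2 hz.1 hz.2 (by positivity) (by linarith)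
  have hvariance : α * β * (g x - g y) ^ 2 ≤ α * β * (K * ‖x - y‖) ^ 2 := by
    have hdist : |g x - g y| ≤ K * ‖x - y‖ := hLip.norm_sub_le hx hy
    exact mul_le_mul_of_nonneg_left (sq_le_sq.2 (hdist.trans (le_abs_self _))) (by positivity)
  calc α * g x ^ 2 + β * g y ^ 2 + α * β * (-(2 * (s * b + K ^ 2)) / 2 * ‖x - y‖ ^ 2)
      = m ^ 2 + α * β * (g x - g y) ^ 2 - 2 * s * e - α * β * (K * ‖x - y‖) ^ 2 := by
        rw [add_mul_sq_eq_sq_add_mul_sub_sq hαβ, he]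
        ring
    _ ≤ z ^ 2 := by linarith

namespace RiemannianManifold

variable {n : ℕ} {M : Type} [MetricSpace M] (R : RiemannianManifold n M)

lemma lipschitzWith_exp_smul (q : M) (v : EuclideanSpace ℝ (Fin n)) :
    LipschitzWith ‖v‖₊ (fun t : ℝ => R.exp q (t • v)) :=
  LipschitzWith.of_dist_le_mul fun x y => by
    simpa only [coe_nnnorm, Real.dist_eq, mul_comm] using R.dist_exp_exp_le q v x y

lemma bConcaveOn_iff_strongConcaveOn {b : ℝ} {f : M → ℝ} {U : Set M} :
    R.BConcaveOn b f U ↔ ∀ q ∈ U, ∀ (v : EuclideanSpace ℝ (Fin n)) (a c : ℝ),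
      MapsTo (fun t : ℝ => R.exp q (t • v)) (Icc a c) U →
      StrongConcaveOn (Icc a c) (-(b * ‖v‖ ^ 2)) (fun t : ℝ => f (R.exp q (t • v))) := by
  have hdefect (v : EuclideanSpace ℝ (Fin n)) (y t : ℝ) :
      y + -(b * ‖v‖ ^ 2) / 2 * ‖t‖ ^ 2 = y - b / 2 * t ^ 2 * ‖v‖ ^ 2 := by
    rw [Real.norm_eq_abs, sq_abs]
    ring
  simp only [strongConcaveOn_iff_convex, hdefect]
  rfl

end RiemannianManifold

theorem sq_of_bConcave_lipschitz_bounded_general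
    {n : ℕ} {M : Type} [MetricSpace M] (R : RiemannianManifold n M) {U : Set M}
    {b s : ℝ} {K : ℝ≥0} (hb : 0 ≤ b) {f : M → ℝ} (hconc : R.BConcaveOn b f U)
    (hLip : LipschitzOnWith K f U) (hf : MapsTo f U (Icc 0 s)) :
    R.BConcaveOn (2 * (s * b + K ^ 2)) (fun y => f y ^ 2) U := by
  rw [R.bConcaveOn_iff_strongConcaveOn] at hconc ⊢
  intro q hq v a c hγ
  have hLip_along : LipschitzOnWith (K * ‖v‖₊) (fun t : ℝ => f (R.exp q (t • v))) (Icc a c) :=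
    hLip.comp (R.lipschitzWith_exp_smul q v).lipschitzOnWith hγ
  have hsq := strongConcaveOn_sq_of_lipschitzOnWith (by positivity) (hconc q hq v a c hγ)
    hLip_along (hf.comp hγ)
  convert hsq using 2
  push_cast
  ring

/-- If `f : U → ℝ` is `b`-concave, `L`-Lipschitz, nonnegative and bounded above by
`s` (with `b, s, L > 0`), then `f²` is `2(s b + L²)`-concave on `U`. -/
theorem sq_of_bConcave_lipschitz_bounded
    {n : ℕ} {M : Type} [MetricSpace M] [ConnectedSpace M] [CompleteSpace M]
    (R : RiemannianManifold n M) {U : Set M} (hU : IsOpen U)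
    {b s L : ℝ} (hb : 0 < b) (hs : 0 < s) (hL : 0 < L) {f : M → ℝ}
    (hconc : R.BConcaveOn b f U)
    (hLip : ∀ x ∈ U, ∀ y ∈ U, |f x - f y| ≤ L * dist x y)
    (hnonneg : ∀ x ∈ U, 0 ≤ f x)
    (hbdd : ∀ x ∈ U, f x ≤ s) :
    R.BConcaveOn (2 * (s * b + L ^ 2)) (fun y => f y ^ 2) U := by
  lift L to ℝ≥0 using hL.le
  exact sq_of_bConcave_lipschitz_bounded_general R hb.le hconc
    (LipschitzOnWith.of_dist_le_mul hLip) fun x hx => ⟨hnonneg x hx, hbdd x hx⟩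
end
end
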